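/- Let A and B be unital complex C*-algebras and T : A → B a continuous unital algebra homomorphism satisfying the strong Riesz property. Then an element a ∈ A is polynomially T-Riesz if and only if its T-Weyl spectrum ω_T(a) is a finite set. -/

import Mathlib

/-!
The Weyl spectrum contains `σ(T a)`, since `T (c + d) = T d` is invertible when `T c = 0` and `d` is
invertible.  If it is finite, the polynomial with a simple root at each of its points
kills `σ(T a)`, so by spectral mapping `P(a)` is `T`-Riesz.

Conversely, if `P(a)` is `T`-Riesz then `σ(T a)` lies in the root set of `P`, a finite set `F`.
By the strong Riesz property `∂σ(a)` is contained in the union of `F` and the isolated points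
of `σ(a)`, hence is countable.  The complement of a countable set in the plane is connected, so
`σ(a) = ∂σ(a)`, and every point of `σ(a)` outside `F` is isolated
(`mem_frontier_of_countable_frontier`).  For such a point `z` take a small circle around it which
avoids `σ(a)` and whose closed disc avoids `σ(T a)`, and let `p` be `r (2πi)⁻¹` times the integral
of the resolvent of `a` along that circle.  By Cauchy's theorem `T p = 0`.  In a
commutative Banach algebra, a character `φ` sends `p` to `r` or `0` according to whether `φ a`
lies inside or outside the circle, so `φ (z - a + p) ≠ 0` for every `φ`, and `z - a + p` is
invertible (`exists_isUnit_add_of_comm`).  The bicommutant of `a` is an inverse-closed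
commutative Banach algebra, which reduces the general case to the commutative one.  So `z - a` is
`T`-Weyl, and the Weyl spectrum is contained in `F`.
-/

open Set Metric Topology

section Resolvent

/-- Where the resolvent of `a` exists, an algebra homomorphism maps it to the resolvent of the
image of `a`. -/
lemma map_resolvent_of_mem {A B : Type*} [Ring A] [Algebra ℂ A] [Ring B] [Algebra ℂ B]
    (f : A →ₐ[ℂ] B) {a : A} {z : ℂ} (hz : z ∉ spectrum ℂ a) :
    f (resolvent a z) = resolvent (f a) z := by
  obtain ⟨u, hu⟩ := spectrum.notMem_iff.1 hz
  have h2 : algebraMap ℂ B z - f a = ((Units.map (f : A →* B) u : Bˣ) : B) := by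
    simp [hu]
  rw [resolvent, resolvent, h2, ← hu, Ring.inverse_unit, Ring.inverse_unit]
  rfl

variable {A B : Type*} [NormedRing A] [NormedAlgebra ℂ A] [CompleteSpace A]
  [NormedRing B] [NormedAlgebra ℂ B] [CompleteSpace B]

lemma differentiableAt_resolvent (a : A) {s : Set ℂ} (hs : Disjoint s (spectrum ℂ a)) :
    ∀ z ∈ s, DifferentiableAt ℂ (resolvent a) z := fun z hz =>
  (spectrum.hasDerivAt_resolvent_const_left (a := a) (k := z)
    (by simpa [spectrum] using disjoint_left.1 hs hz)).differentiableAt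

/-- Cauchy's theorem for the resolvent. -/
lemma circleIntegral_resolvent_eq_zero (b : B) {c : ℂ} {r : ℝ} (hr : 0 ≤ r)
    (hb : Disjoint (closedBall c r) (spectrum ℂ b)) : (∮ z in C(c, r), resolvent b z) = 0 := by
  have h := differentiableAt_resolvent b hb
  exact Complex.circleIntegral_eq_zero_of_differentiable_on_off_countable hr countable_empty
    (fun z hz => (h z hz).continuousAt.continuousWithinAt)
    (fun z hz => h z (ball_subset_closedBall hz.1))

lemma map_circleIntegral_resolvent (f : A →ₐ[ℂ] B) (hf : Continuous f) (a : A) {c : ℂ} {r : ℝ}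
    (hr : 0 ≤ r) (ha : Disjoint (sphere c r) (spectrum ℂ a)) :
    f (∮ z in C(c, r), resolvent a z) = ∮ z in C(c, r), resolvent (f a) z := by
  let L : A →L[ℂ] B := ⟨f.toLinearMap, hf⟩
  have hint : CircleIntegrable (resolvent a) c r :=
    ContinuousOn.circleIntegrable hr fun z hz =>
      (differentiableAt_resolvent a ha z hz).continuousAt.continuousWithinAt
  calc f (∮ z in C(c, r), resolvent a z)
      = L (∮ z in C(c, r), resolvent a z) := rfl
    _ = ∮ z in C(c, r), L (resolvent a z) := by
        rw [circleIntegral, ← L.intervalIntegral_comp_comm hint.out]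
        simp [circleIntegral]
    _ = ∮ z in C(c, r), resolvent (f a) z :=
        circleIntegral.integral_congr hr fun z hz =>
          map_resolvent_of_mem f (disjoint_left.1 ha hz)

end Resolvent

/-- In a commutative Banach algebra, a multiple `p` of the integral of the resolvent along a circle
centred at `c` and avoiding `σ(a)` makes `c - a + p` invertible; it is killed by `T` because `σ(T a)`
avoids the closed disc. The factor `r (2πi)⁻¹` makes `φ p` equal to `r` for a character `φ` with
`|c - φ a| < r`, so that `c - φ a + r ≠ 0`. -/
lemma exists_isUnit_add_of_comm {A B : Type*} [NormedCommRing A] [NormedAlgebra ℂ A]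
    [CompleteSpace A] [NormedRing B] [NormedAlgebra ℂ B] [CompleteSpace B]
    (T : A →ₐ[ℂ] B) (hT : Continuous T) (a : A) {c : ℂ} {r : ℝ} (hr : 0 < r)
    (ha : Disjoint (sphere c r) (spectrum ℂ a))
    (hb : Disjoint (closedBall c r) (spectrum ℂ (T a))) :
    ∃ p : A, T p = 0 ∧ IsUnit (algebraMap ℂ A c - a + p) := by
  refine ⟨((r : ℂ) * (2 * Real.pi * Complex.I)⁻¹) • ∮ z in C(c, r), resolvent a z, ?_, ?_⟩
  · rw [map_smul, map_circleIntegral_resolvent T hT a hr.le ha,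
      circleIntegral_resolvent_eq_zero _ hr.le hb, smul_zero]
  · by_contra hu
    obtain ⟨φ, hφ⟩ := WeakDual.CharacterSpace.exists_apply_eq_zero hu
    have key := map_circleIntegral_resolvent (WeakDual.CharacterSpace.toAlgHom φ)
      (WeakDual.CharacterSpace.toCLM φ).continuous a hr.le ha
    have hkey : φ (∮ z in C(c, r), resolvent a z) = ∮ z in C(c, r), resolvent (φ a) z := key
    rw [map_add, map_sub, AlgHomClass.commutes, map_smul, hkey] at hφ
    have hres : ∀ z : ℂ, resolvent (φ a) z = (z - φ a)⁻¹ := fun z => by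
      simp [resolvent]
    have hsph : φ a ∉ sphere c r := fun h =>
      disjoint_left.1 ha h (AlgHom.apply_mem_spectrum φ a)
    by_cases hin : φ a ∈ ball c r
    · simp only [hres] at hφ
      rw [circleIntegral.integral_sub_inv_of_mem_ball hin, smul_eq_mul, mul_assoc,
        inv_mul_cancel₀ Complex.two_pi_I_ne_zero] at hφ
      have h1 : φ a - c = r := by
        simp only [Algebra.algebraMap_self, RingHom.id_apply, mul_one] at hφ
        linear_combination -hφ
      rw [mem_ball, dist_eq_norm, h1, Complex.norm_real, Real.norm_of_nonneg hr.le] at hin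
      exact lt_irrefl _ hin
    · have hout : φ a ∉ closedBall c r := by
        rw [← ball_union_sphere]; exact fun h => h.elim hin hsph
      have hdisj : Disjoint (closedBall c r) (spectrum ℂ (φ a)) := by
        refine disjoint_left.2 fun w hw hws => hout ?_
        have hwφ : w = φ a := by
          by_contra hne
          exact hws (isUnit_iff_ne_zero.2 (sub_ne_zero.2 hne))
        exact hwφ ▸ hw
      rw [circleIntegral_resolvent_eq_zero _ hr.le hdisj, smul_zero, add_zero] at hφ
      have : φ a = c := by
        simp only [Algebra.algebraMap_self, RingHom.id_apply] at hφ
        linear_combination -hφ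
      exact hin (this ▸ mem_ball_self hr)

/-- The noncommutative form of `exists_isUnit_add_of_comm`, obtained by working in the bicommutant
of `a`. -/
lemma exists_isUnit_add {A B : Type*} [NormedRing A] [NormedAlgebra ℂ A]
    [CompleteSpace A] [NormedRing B] [NormedAlgebra ℂ B] [CompleteSpace B]
    (T : A →ₐ[ℂ] B) (hT : Continuous T) (a : A) {c : ℂ} {r : ℝ} (hr : 0 < r)
    (ha : Disjoint (sphere c r) (spectrum ℂ a))
    (hb : Disjoint (closedBall c r) (spectrum ℂ (T a))) :
    ∃ p : A, T p = 0 ∧ IsUnit (algebraMap ℂ A c - a + p) := by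
  let C : Subalgebra ℂ A := Subalgebra.centralizer ℂ (Set.centralizer ({a} : Set A))
  have hcomm : ∀ x y : C, x * y = y * x := fun x y => Subtype.ext <|
    Set.centralizer_centralizer_comm_of_comm (S := ({a} : Set A))
      (by rintro x rfl y rfl; rfl) _ x.2 _ y.2
  let _ : NormedCommRing C := { (inferInstance : NormedRing C) with mul_comm := hcomm }
  have hclosed : IsClosed (C : Set A) := Set.isClosed_centralizer _
  have : CompleteSpace C := hclosed.completeSpace_coe
  let a' : C := ⟨a, Set.subset_centralizer_centralizer (mem_singleton a)⟩
  have hspec : spectrum ℂ a' ⊆ spectrum ℂ a := by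
    intro z hz hza
    apply hz
    obtain ⟨u, hu⟩ := hza
    have huC : (u : A) ∈ C := by
      rw [hu]; exact (algebraMap ℂ C z - a').2
    -- the bicommutant contains the inverses of its elements that are invertible in `A`
    have hinv : ((u⁻¹ : Aˣ) : A) ∈ C := fun x hx =>
      ((show Commute x (u : A) from huC x hx).units_inv_right : _)
    have e1 : (⟨u, huC⟩ : C) = algebraMap ℂ C z - a' := Subtype.ext hu
    change IsUnit (algebraMap ℂ C z - a')
    rw [← e1]
    exact IsUnit.of_mul_eq_one (⟨_, hinv⟩ : C) (Subtype.ext u.mul_inv)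
  obtain ⟨p, hp, hu⟩ := exists_isUnit_add_of_comm (T.comp C.val)
    (hT.comp continuous_subtype_val) a' hr (ha.mono_right hspec) hb
  exact ⟨p, hp, hu.map C.val⟩

/-- A compact planar set with countable boundary has empty interior, since the
complement of the boundary is connected. -/
lemma mem_frontier_of_countable_frontier {K : Set ℂ} (hK : IsCompact K)
    (hc : (frontier K).Countable) : K ⊆ frontier K := by
  intro x hx
  by_contra hxf
  have hconn : IsPreconnected (frontier K)ᶜ :=
    (hc.isConnected_compl_of_one_lt_rank (by simp)).isPreconnected
  obtain ⟨y, hy⟩ := (ne_univ_iff_exists_notMem K).1 hK.ne_univ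
  have hxi : x ∈ interior K := by
    rw [hK.isClosed.frontier_eq] at hxf
    by_contra h
    exact hxf ⟨hx, h⟩
  have hyf : y ∈ (frontier K)ᶜ := fun h => hy (hK.isClosed.frontier_subset h)
  obtain ⟨w, -, hw1, hw2⟩ := hconn (interior K) Kᶜ isOpen_interior hK.isClosed.isOpen_compl
    (fun w hw => by
      by_cases hwK : w ∈ K
      · left
        by_contra h
        exact hw (by rw [hK.isClosed.frontier_eq]; exact ⟨hwK, h⟩)
      · exact Or.inr hwK)
    ⟨x, hxf, hxi⟩ ⟨y, hyf, hy⟩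
  exact hw2 (interior_subset hw1)

lemma countable_isolated (K : Set ℂ) :
    (K \ {z : ℂ | z ∈ closure (K \ {z})}).Countable := by
  set I := K \ {z : ℂ | z ∈ closure (K \ {z})} with hI
  have : DiscreteTopology I := by
    rw [discreteTopology_subtype_iff]
    intro x hx
    by_contra h
    refine hx.2 ?_
    rw [mem_ofPred_eq, mem_closure_iff_nhdsWithin_neBot]
    refine Filter.NeBot.mono (f := 𝓝[≠] x ⊓ Filter.principal I) ⟨h⟩ ?_
    rw [nhdsWithin, nhdsWithin, inf_assoc, Filter.inf_principal]
    gcongr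
    rintro w ⟨h1, h2⟩
    exact ⟨h2.1, h1⟩
  exact (TopologicalSpace.separableSpace_iff_countable (α := I)).1 inferInstance

/-- If `T` has the strong Riesz property, then `a` is polynomially `T`-Riesz
if and only if its `T`-Weyl spectrum is finite. -/
theorem polyTRiesz_iff_weyl_spectrum_finite
    {A B : Type*}
    [NormedRing A] [StarRing A] [CStarRing A] [NormedAlgebra ℂ A]
    [CompleteSpace A] [StarModule ℂ A] [Nontrivial A]
    [NormedRing B] [StarRing B] [CStarRing B] [NormedAlgebra ℂ B]
    [CompleteSpace B] [StarModule ℂ B] [Nontrivial B]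
    (T : A →ₐ[ℂ] B) (hTcont : Continuous T)
    (hStrongRiesz : ∀ x : A, frontier (spectrum ℂ x) ⊆
      spectrum ℂ (T x) ∪
        (spectrum ℂ x \ {z : ℂ | z ∈ closure (spectrum ℂ x \ {z})}))
    (a : A) :
    (∃ P : Polynomial ℂ, P ≠ 0 ∧
        spectrum ℂ (T (Polynomial.aeval a P)) ⊆ {0}) ↔
      Set.Finite {z : ℂ | ¬ ∃ c d : A,
        algebraMap ℂ A z - a = c + d ∧ T c = 0 ∧ IsUnit d} := by
  constructor
  · rintro ⟨P, hP, hPs⟩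
    have hF : (spectrum ℂ (T a)).Finite := by
      refine (Polynomial.finite_setOfPred_isRoot hP).subset fun z hz => ?_
      rw [← Polynomial.aeval_algHom_apply] at hPs
      exact hPs (spectrum.subset_polynomial_aeval (T a) P ⟨z, hz, rfl⟩)
    refine hF.subset fun z hz => ?_
    by_contra hzT
    apply hz
    by_cases hza : z ∈ spectrum ℂ a
    · have hfr := mem_frontier_of_countable_frontier (spectrum.isCompact a)
        ((hF.countable.union (countable_isolated _)).mono (hStrongRiesz a)) hza
      have hiso := ((hStrongRiesz a hfr).resolve_left hzT).2
      -- a disc around `z` meets `σ(a)` only in `z` and does not meet `σ(T a)`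
      have hopen : IsOpen ((closure (spectrum ℂ a \ {z}))ᶜ ∩ (spectrum ℂ (T a))ᶜ) :=
        isClosed_closure.isOpen_compl.inter (spectrum.isClosed _).isOpen_compl
      obtain ⟨r, hr, hball⟩ := nhds_basis_closedBall.mem_iff.1 (hopen.mem_nhds ⟨hiso, hzT⟩)
      obtain ⟨p, hp, hu⟩ := exists_isUnit_add T hTcont a (c := z) hr
        (disjoint_left.2 fun w hw hwa => (hball (sphere_subset_closedBall hw)).1
          (subset_closure ⟨hwa, fun h => by
            rw [mem_singleton_iff.1 h, mem_sphere, dist_self] at hw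
            exact hr.ne hw⟩))
        (disjoint_left.2 fun w hw => (hball hw).2)
      exact ⟨-p, _, by abel, by simp [hp], hu⟩
    · exact ⟨0, _, (zero_add _).symm, map_zero T, spectrum.notMem_iff.1 hza⟩
  · intro hfin
    refine ⟨∏ z ∈ hfin.toFinset, (Polynomial.X - Polynomial.C z),
      Finset.prod_ne_zero_iff.2 fun z _ => Polynomial.X_sub_C_ne_zero z, ?_⟩
    rw [← Polynomial.aeval_algHom_apply, spectrum.map_polynomial_aeval]
    rintro _ ⟨z, hz, rfl⟩
    have hzW : z ∈ hfin.toFinset := by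
      rw [Set.Finite.mem_toFinset]
      rintro ⟨c, d, hcd, hc, hd⟩
      apply hz
      have h : algebraMap ℂ B z - T a = T d := by
        simpa [hc] using congrArg T hcd
      change IsUnit (algebraMap ℂ B z - T a)
      rw [h]
      exact hd.map T
    simp only [mem_singleton_iff, Polynomial.eval_prod]
    exact Finset.prod_eq_zero hzW (by simp)
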